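/- Fix d ∈ ℕ, a smooth function U : ℝ^d → ℝ with ‖∇²U‖_∞ < ∞, and a constant σ > 0, and let L be the kinetic Langevin operator L h = −y·∇_x h + (∇U(x) − y/σ)·∇_y h + Δ_y h. Set κ = ‖∇²U‖_∞ + 1 + 1/σ, β = 1 + 2κ², and A = ∇_x + ∇_y. Then for every smooth h : ℝ^d × ℝ^d → (0,∞), pointwise on ℝ^d × ℝ^d, (1/2)[ L(|Ah|²/h + β h ln h) − ( 2(Ah)·A(Lh)/h − |Ah|² Lh/h² + β(1 + ln h) Lh ) ] ≥ (1/2) |∇h|²/h, where ∇ = (∇_x, ∇_y) is the full gradient. -/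

import Mathlib

noncomputable section

open scoped BigOperators

open scoped BigOperators

/-- Partial derivative in the `i`-th `x`-direction of `f : ℝ^d × ℝ^d → ℝ`. -/
def pdx {d : ℕ} (i : Fin d) (f : (Fin d → ℝ) × (Fin d → ℝ) → ℝ)
    (z : (Fin d → ℝ) × (Fin d → ℝ)) : ℝ :=
  fderiv ℝ f z (Pi.single i (1 : ℝ), 0)

/-- Partial derivative in the `i`-th `y`-direction of `f : ℝ^d × ℝ^d → ℝ`. -/
def pdy {d : ℕ} (i : Fin d) (f : (Fin d → ℝ) × (Fin d → ℝ) → ℝ)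
    (z : (Fin d → ℝ) × (Fin d → ℝ)) : ℝ :=
  fderiv ℝ f z (0, Pi.single i (1 : ℝ))

/-- `i`-th component of `∇U`. -/
def gradU {d : ℕ} (U : (Fin d → ℝ) → ℝ) (i : Fin d) (x : Fin d → ℝ) : ℝ :=
  fderiv ℝ U x (Pi.single i (1 : ℝ))

/-- `(i,j)` entry of the Hessian matrix `∇²U`. -/
def hessU {d : ℕ} (U : (Fin d → ℝ) → ℝ) (i j : Fin d) (x : Fin d → ℝ) : ℝ :=
  fderiv ℝ (fun u => fderiv ℝ U u (Pi.single j (1 : ℝ))) x (Pi.single i (1 : ℝ))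

/-- The kinetic Langevin operator `L h = −y·∇ₓh + (∇U(x) − y/σ)·∇_y h + Δ_y h`. -/
def langevin {d : ℕ} (U : (Fin d → ℝ) → ℝ) (σ : ℝ)
    (f : (Fin d → ℝ) × (Fin d → ℝ) → ℝ) (z : (Fin d → ℝ) × (Fin d → ℝ)) : ℝ :=
  (∑ i, -(z.2 i) * pdx i f z)
    + (∑ i, (gradU U i z.1 - z.2 i / σ) * pdy i f z)
    + ∑ i, pdy i (fun w => pdy i f w) z

/-- The supremum over x of the Frobenius norm of the Hessian of U, i.e. ‖∇²U‖_∞. -/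
def hessNormInf {d : ℕ} (U : (Fin d → ℝ) → ℝ) : ℝ :=
  ⨆ x : Fin d → ℝ, Real.sqrt (∑ i, ∑ j, (hessU U i j x) ^ 2)

/-!
For a diffusion operator `L = b·∇ + ∑ⱼ ∂_{eⱼ}²` with constant directions `eⱼ`, the functional
`|Ah|²/h` contributes to `Γ_{L,Φ}` a nonnegative square, because `(a, h) ↦ a²/h` is jointly convex,
plus the commutator term `-⟨Ah, [A, L]h⟩/h`; and `[∂ᵥ, L] = ∂_{Db·v}` is of first order. The entropy
`h log h` contributes `∑ⱼ |∂_{eⱼ}h|²/(2h)`, here `|∇_y h|²/(2h)`.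

For the Langevin drift, `A = ∇ₓ + ∇_y` turns the commutator term into
`⟨p + q, p - (∇²U) q + q/σ⟩/h` with `p = ∇ₓh`, `q = ∇_y h`. Since `p = (p + q) - q`, it equals
`|p + q|²/h` up to errors that `|p + q|²/(2h)` and a large multiple of `|q|²/h` absorb, so the
degenerate noise in `y` also controls `∇ₓh`.
-/

open Filter Topology

section DiffusionOperator

variable {E ι κ : Type*} [NormedAddCommGroup E] [NormedSpace ℝ E] {f g h : E → ℝ} {z : E}

/-- The derivative of `f` at `z` in the direction `v`, defined through the total derivative so that
it is linear in `v` for every `f`. -/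
def dirDeriv (v : E) (f : E → ℝ) (z : E) : ℝ :=
  fderiv ℝ f z v

lemma contDiffAt_dirDeriv {m n : WithTop ℕ∞} (hf : ContDiffAt ℝ n f z) (hmn : m + 1 ≤ n) (v : E) :
    ContDiffAt ℝ m (dirDeriv v f) z :=
  (hf.fderiv_right hmn).clm_apply contDiffAt_const

lemma differentiableAt_dirDeriv (hf : ContDiffAt ℝ 2 f z) (v : E) :
    DifferentiableAt ℝ (dirDeriv v f) z :=
  (contDiffAt_dirDeriv hf (m := 1) (by norm_num) v).differentiableAt one_ne_zero

lemma eventually_differentiableAt_of_contDiffAt_two (hf : ContDiffAt ℝ 2 f z) :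
    ∀ᶠ w in 𝓝 z, DifferentiableAt ℝ f w :=
  (hf.eventually (by simp)).mono fun _ hw => hw.differentiableAt two_ne_zero

lemma dirDeriv_congr (hfg : f =ᶠ[𝓝 z] g) (v : E) : dirDeriv v f z = dirDeriv v g z := by
  rw [dirDeriv, dirDeriv, hfg.fderiv_eq]

lemma dirDeriv_dirDeriv (hf : ContDiffAt ℝ 2 f z) (v w : E) :
    dirDeriv v (dirDeriv w f) z = fderiv ℝ (fderiv ℝ f) z v w := by
  have hdf : DifferentiableAt ℝ (fderiv ℝ f) z :=
    (hf.fderiv_right (m := 1) (by norm_num)).differentiableAt one_ne_zero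
  change fderiv ℝ (fun u => fderiv ℝ f u w) z v = _
  simp [fderiv_clm_apply hdf (differentiableAt_const w)]

lemma dirDeriv_comm (hf : ContDiffAt ℝ 2 f z) (v w : E) :
    dirDeriv v (dirDeriv w f) z = dirDeriv w (dirDeriv v f) z := by
  rw [dirDeriv_dirDeriv hf, dirDeriv_dirDeriv hf]
  exact hf.isSymmSndFDerivAt (by simp) v w

lemma dirDeriv_add (hf : DifferentiableAt ℝ f z) (hg : DifferentiableAt ℝ g z) (v : E) :
    dirDeriv v (fun w => f w + g w) z = dirDeriv v f z + dirDeriv v g z := by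
  simp [dirDeriv, fderiv_fun_add hf hg]

lemma dirDeriv_sum {s : Finset ι} {F : ι → E → ℝ} (hF : ∀ i ∈ s, DifferentiableAt ℝ (F i) z)
    (v : E) : dirDeriv v (fun w => ∑ i ∈ s, F i w) z = ∑ i ∈ s, dirDeriv v (F i) z := by
  simp [dirDeriv, fderiv_fun_sum hF]

lemma dirDeriv_mul (hf : DifferentiableAt ℝ f z) (hg : DifferentiableAt ℝ g z) (v : E) :
    dirDeriv v (fun w => f w * g w) z = f z * dirDeriv v g z + g z * dirDeriv v f z := by
  simp [dirDeriv, fderiv_fun_mul hf hg]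

lemma dirDeriv_comp {φ : ℝ → ℝ} {φ' : ℝ} (hφ : HasDerivAt φ φ' (f z))
    (hf : DifferentiableAt ℝ f z) (v : E) :
    dirDeriv v (fun w => φ (f w)) z = φ' * dirDeriv v f z := by
  have hcomp : HasFDerivAt (fun w => φ (f w)) (φ' • fderiv ℝ f z) z :=
    hφ.comp_hasFDerivAt z hf.hasFDerivAt
  simp [dirDeriv, hcomp.fderiv]

variable [Fintype κ]

/-- The diffusion operator `b·∇ + ∑ⱼ ∂_{eⱼ}²` with drift `b` and constant noise directions `eⱼ`. -/
def diffusionOp (b : E → E) (e : κ → E) (f : E → ℝ) (z : E) : ℝ :=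
  dirDeriv (b z) f z + ∑ j, dirDeriv (e j) (dirDeriv (e j) f) z

/-- The carré du champ `∑ⱼ (∂_{eⱼ} f) (∂_{eⱼ} g)` of `diffusionOp b e`, which does not depend on the
drift `b`. -/
def carreDuChamp (e : κ → E) (f g : E → ℝ) (z : E) : ℝ :=
  ∑ j, dirDeriv (e j) f z * dirDeriv (e j) g z

variable (b : E → E) (e : κ → E)

lemma diffusionOp_add (hf : ContDiffAt ℝ 2 f z) (hg : ContDiffAt ℝ 2 g z) :
    diffusionOp b e (fun w => f w + g w) z = diffusionOp b e f z + diffusionOp b e g z := by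
  have second (j : κ) : dirDeriv (e j) (dirDeriv (e j) fun w => f w + g w) z =
      dirDeriv (e j) (dirDeriv (e j) f) z + dirDeriv (e j) (dirDeriv (e j) g) z := by
    rw [← dirDeriv_add (differentiableAt_dirDeriv hf _) (differentiableAt_dirDeriv hg _)]
    refine dirDeriv_congr ?_ _
    filter_upwards [eventually_differentiableAt_of_contDiffAt_two hf,
      eventually_differentiableAt_of_contDiffAt_two hg] with w hfw hgw
    exact dirDeriv_add hfw hgw _
  simp only [diffusionOp, second, Finset.sum_add_distrib,
    dirDeriv_add (hf.differentiableAt two_ne_zero) (hg.differentiableAt two_ne_zero)]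
  ring

lemma diffusionOp_sum {s : Finset ι} {F : ι → E → ℝ} (hF : ∀ i ∈ s, ContDiffAt ℝ 2 (F i) z) :
    diffusionOp b e (fun w => ∑ i ∈ s, F i w) z = ∑ i ∈ s, diffusionOp b e (F i) z := by
  have second (j : κ) : dirDeriv (e j) (dirDeriv (e j) fun w => ∑ i ∈ s, F i w) z =
      ∑ i ∈ s, dirDeriv (e j) (dirDeriv (e j) (F i)) z := by
    rw [← dirDeriv_sum fun i hi => differentiableAt_dirDeriv (hF i hi) _]
    refine dirDeriv_congr ?_ _
    filter_upwards [s.eventually_all.2 fun i hi =>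
      eventually_differentiableAt_of_contDiffAt_two (hF i hi)] with w hw
    exact dirDeriv_sum hw _
  simp only [diffusionOp, second, Finset.sum_add_distrib,
    dirDeriv_sum fun i hi => (hF i hi).differentiableAt two_ne_zero]
  rw [Finset.sum_comm]

lemma diffusionOp_mul (hf : ContDiffAt ℝ 2 f z) (hg : ContDiffAt ℝ 2 g z) :
    diffusionOp b e (fun w => f w * g w) z =
      f z * diffusionOp b e g z + g z * diffusionOp b e f z + 2 * carreDuChamp e f g z := by
  have hf₁ := hf.differentiableAt two_ne_zero
  have hg₁ := hg.differentiableAt two_ne_zero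
  have second (j : κ) : dirDeriv (e j) (dirDeriv (e j) fun w => f w * g w) z =
      f z * dirDeriv (e j) (dirDeriv (e j) g) z + g z * dirDeriv (e j) (dirDeriv (e j) f) z +
        2 * (dirDeriv (e j) f z * dirDeriv (e j) g z) := by
    have hf₂ := differentiableAt_dirDeriv hf (e j)
    have hg₂ := differentiableAt_dirDeriv hg (e j)
    have first : dirDeriv (e j) (fun w => f w * g w) =ᶠ[𝓝 z]
        fun w => f w * dirDeriv (e j) g w + g w * dirDeriv (e j) f w := by
      filter_upwards [eventually_differentiableAt_of_contDiffAt_two hf,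
        eventually_differentiableAt_of_contDiffAt_two hg] with w hfw hgw
      exact dirDeriv_mul hfw hgw _
    rw [dirDeriv_congr first, dirDeriv_add (hf₁.fun_mul hg₂) (hg₁.fun_mul hf₂),
      dirDeriv_mul hf₁ hg₂, dirDeriv_mul hg₁ hf₂]
    ring
  simp only [diffusionOp, carreDuChamp, second, Finset.sum_add_distrib, ← Finset.mul_sum,
    dirDeriv_mul hf₁ hg₁]
  ring

lemma diffusionOp_comp {φ φ' : ℝ → ℝ} {φ'' : ℝ} (hφ : ∀ᶠ t in 𝓝 (f z), HasDerivAt φ (φ' t) t)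
    (hφ' : HasDerivAt φ' φ'' (f z)) (hf : ContDiffAt ℝ 2 f z) :
    diffusionOp b e (fun w => φ (f w)) z =
      φ' (f z) * diffusionOp b e f z + φ'' * carreDuChamp e f f z := by
  have hf₁ := hf.differentiableAt two_ne_zero
  have second (j : κ) : dirDeriv (e j) (dirDeriv (e j) fun w => φ (f w)) z =
      φ' (f z) * dirDeriv (e j) (dirDeriv (e j) f) z +
        φ'' * (dirDeriv (e j) f z * dirDeriv (e j) f z) := by
    have first : dirDeriv (e j) (fun w => φ (f w)) =ᶠ[𝓝 z]
        fun w => φ' (f w) * dirDeriv (e j) f w := by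
      filter_upwards [hf.continuousAt.eventually hφ,
        eventually_differentiableAt_of_contDiffAt_two hf] with w hφw hfw
      exact dirDeriv_comp hφw hfw _
    have hφ'f : DifferentiableAt ℝ (fun w => φ' (f w)) z :=
      hφ'.differentiableAt.fun_comp' z hf₁
    rw [dirDeriv_congr first, dirDeriv_mul hφ'f (differentiableAt_dirDeriv hf _),
      dirDeriv_comp hφ' hf₁]
    ring
  simp only [diffusionOp, carreDuChamp, second, Finset.sum_add_distrib, ← Finset.mul_sum,
    dirDeriv_comp hφ.self_of_nhds hf₁]
  ring

lemma carreDuChamp_comp_comp {φ ψ : ℝ → ℝ} {φ' ψ' : ℝ} (hφ : HasDerivAt φ φ' (f z))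
    (hψ : HasDerivAt ψ ψ' (g z)) (hf : DifferentiableAt ℝ f z) (hg : DifferentiableAt ℝ g z) :
    carreDuChamp e (fun w => φ (f w)) (fun w => ψ (g w)) z = φ' * ψ' * carreDuChamp e f g z := by
  simp only [carreDuChamp, dirDeriv_comp hφ hf, dirDeriv_comp hψ hg, Finset.mul_sum]
  exact Finset.sum_congr rfl fun j _ => by ring

lemma carreDuChamp_quadratic_nonneg (f g : E → ℝ) (z : E) (c : ℝ) :
    0 ≤ carreDuChamp e f f z - 2 * c * carreDuChamp e f g z + c ^ 2 * carreDuChamp e g g z := by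
  have hsq : carreDuChamp e f f z - 2 * c * carreDuChamp e f g z + c ^ 2 * carreDuChamp e g g z =
      ∑ j, (dirDeriv (e j) f z - c * dirDeriv (e j) g z) ^ 2 := by
    simp only [carreDuChamp, Finset.mul_sum, ← Finset.sum_sub_distrib, ← Finset.sum_add_distrib]
    exact Finset.sum_congr rfl fun j _ => by ring
  rw [hsq]
  positivity

lemma diffusionOp_sq (hf : ContDiffAt ℝ 2 f z) :
    diffusionOp b e (fun w => f w ^ 2) z =
      2 * f z * diffusionOp b e f z + 2 * carreDuChamp e f f z :=
  diffusionOp_comp b e (φ := fun t => t ^ 2) (φ' := fun t => 2 * t)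
    (.of_forall fun t => by simpa using hasDerivAt_pow 2 t)
    (by simpa using (hasDerivAt_id (f z)).const_mul 2) hf

lemma diffusionOp_inv (hf : ContDiffAt ℝ 2 f z) (hz : f z ≠ 0) :
    diffusionOp b e (fun w => (f w)⁻¹) z =
      -(f z ^ 2)⁻¹ * diffusionOp b e f z + 2 / f z ^ 3 * carreDuChamp e f f z := by
  refine diffusionOp_comp b e (φ := fun t => t⁻¹) (φ' := fun t => -(t ^ 2)⁻¹)
    ((eventually_ne_nhds hz).mono fun t ht => hasDerivAt_inv ht) ?_ hf
  refine ((hasDerivAt_pow 2 (f z)).fun_inv (pow_ne_zero 2 hz)).fun_neg.congr_deriv ?_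
  field_simp
  norm_num [mul_comm]

lemma diffusionOp_const_mul_mul_log (c : ℝ) (hf : ContDiffAt ℝ 2 f z) (hz : f z ≠ 0) :
    diffusionOp b e (fun w => c * (f w * Real.log (f w))) z =
      c * (1 + Real.log (f z)) * diffusionOp b e f z + c / f z * carreDuChamp e f f z := by
  refine diffusionOp_comp b e (φ := fun t => c * (t * Real.log t))
    (φ' := fun t => c * (1 + Real.log t)) ((eventually_ne_nhds hz).mono fun t ht => ?_) ?_ hf
  · simpa only [add_comm] using (Real.hasDerivAt_mul_log ht).const_mul c
  · simpa only [div_eq_mul_inv] using ((Real.hasDerivAt_log hz).const_add 1).const_mul c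

-- The discarded term is the Hessian of the jointly convex map `(a, h) ↦ a²/h` along the noise.
lemma le_diffusionOp_sq_div (hf : ContDiffAt ℝ 2 f z) (hh : ContDiffAt ℝ 2 h z) (hz : 0 < h z) :
    2 * f z * diffusionOp b e f z / h z - f z ^ 2 * diffusionOp b e h z / h z ^ 2 ≤
      diffusionOp b e (fun w => f w ^ 2 / h w) z := by
  have hinv : ContDiffAt ℝ 2 (fun w => (h w)⁻¹) z := hh.inv hz.ne'
  have hcross : carreDuChamp e (fun w => f w ^ 2) (fun w => (h w)⁻¹) z =
      2 * f z * -(h z ^ 2)⁻¹ * carreDuChamp e f h z :=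
    carreDuChamp_comp_comp e (by simpa using hasDerivAt_pow 2 (f z)) (hasDerivAt_inv hz.ne')
      (hf.differentiableAt two_ne_zero) (hh.differentiableAt two_ne_zero)
  have hL : diffusionOp b e (fun w => f w ^ 2 / h w) z =
      2 * f z * diffusionOp b e f z / h z - f z ^ 2 * diffusionOp b e h z / h z ^ 2 +
        2 / h z * (carreDuChamp e f f z - 2 * (f z / h z) * carreDuChamp e f h z +
          (f z / h z) ^ 2 * carreDuChamp e h h z) := by
    simp only [div_eq_mul_inv (_ ^ 2) (h _)]
    rw [diffusionOp_mul b e (hf.pow 2) hinv, diffusionOp_sq b e hf,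
      diffusionOp_inv b e hh hz.ne', hcross]
    field_simp
    ring
  rw [hL, le_add_iff_nonneg_right]
  exact mul_nonneg (by positivity) (carreDuChamp_quadratic_nonneg e f h z _)

variable {b}

lemma dirDeriv_diffusionOp (hb : DifferentiableAt ℝ b z) (hf : ContDiffAt ℝ 3 f z) (v : E) :
    dirDeriv v (diffusionOp b e f) z =
      diffusionOp b e (dirDeriv v f) z + dirDeriv (fderiv ℝ b z v) f z := by
  have hf₂ : ContDiffAt ℝ 2 f z := hf.of_le (by norm_num)
  have hdf : DifferentiableAt ℝ (fderiv ℝ f) z :=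
    (hf₂.fderiv_right (m := 1) (by norm_num)).differentiableAt one_ne_zero
  have hfe (w : E) : ContDiffAt ℝ 2 (dirDeriv w f) z := contDiffAt_dirDeriv hf (by norm_num) w
  have hfee (j : κ) : DifferentiableAt ℝ (dirDeriv (e j) (dirDeriv (e j) f)) z :=
    differentiableAt_dirDeriv (hfe _) _
  have drift : dirDeriv v (fun w => dirDeriv (b w) f w) z =
      dirDeriv (b z) (dirDeriv v f) z + dirDeriv (fderiv ℝ b z v) f z := by
    rw [dirDeriv_comm hf₂, dirDeriv_dirDeriv hf₂]
    change fderiv ℝ (fun w => fderiv ℝ f w (b w)) z v = _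
    simp [fderiv_clm_apply hdf hb, dirDeriv, add_comm]
  have noise (j : κ) : dirDeriv v (dirDeriv (e j) (dirDeriv (e j) f)) z =
      dirDeriv (e j) (dirDeriv (e j) (dirDeriv v f)) z := by
    rw [dirDeriv_comm (hfe _)]
    refine dirDeriv_congr ?_ _
    filter_upwards [hf₂.eventually (by simp)] with w hw
    exact dirDeriv_comm hw _ _
  have hdrift : DifferentiableAt ℝ (fun w => dirDeriv (b w) f w) z := hdf.clm_apply hb
  change dirDeriv v (fun w => dirDeriv (b w) f w + ∑ j, dirDeriv (e j) (dirDeriv (e j) f) w) z = _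
  rw [dirDeriv_add hdrift (.fun_sum fun j _ => hfee j), dirDeriv_sum fun j _ => hfee j, drift]
  simp only [noise, diffusionOp]
  ring

/-- The functional `Γ_{L,Φ}(h) = (L(Φ(h)) - D_hΦ(h)·Lh) / 2`, where `DΦ h g` stands for the Gateaux
derivative `D_hΦ(h)·g`. For `Φ(h) = h²` and a diffusion operator it is the carré du champ. -/
def generalizedGamma (L Φ : (E → ℝ) → E → ℝ) (DΦ : (E → ℝ) → (E → ℝ) → E → ℝ) (h : E → ℝ)
    (z : E) : ℝ :=
  (1 / 2) * (L (Φ h) z - DΦ h (L h) z)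

section DistortedEntropy

variable [Fintype ι] (v : ι → E) (β : ℝ)

/-- The functional `Φ(h) = |Ah|²/h + β h log h`, where `A` is the gradient along the directions
`vᵢ`. -/
def distortedEntropy (h : E → ℝ) (z : E) : ℝ :=
  (∑ i, dirDeriv (v i) h z ^ 2) / h z + β * (h z * Real.log (h z))

/-- The Gateaux derivative `D_hΦ(h)·g` of `distortedEntropy v β`, in explicit form. -/
def distortedEntropyDeriv (h g : E → ℝ) (z : E) : ℝ :=
  2 * (∑ i, dirDeriv (v i) h z * dirDeriv (v i) g z) / h z -
    (∑ i, dirDeriv (v i) h z ^ 2) * g z / h z ^ 2 + β * (1 + Real.log (h z)) * g z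

lemma le_diffusionOp_sum_sq_dirDeriv_div (hb : DifferentiableAt ℝ b z) (hh : ContDiffAt ℝ 3 h z)
    (hz : 0 < h z) :
    (2 * (∑ i, dirDeriv (v i) h z * dirDeriv (v i) (diffusionOp b e h) z) / h z -
        (∑ i, dirDeriv (v i) h z ^ 2) * diffusionOp b e h z / h z ^ 2) -
      2 * (∑ i, dirDeriv (v i) h z * dirDeriv (fderiv ℝ b z (v i)) h z) / h z ≤
      diffusionOp b e (fun w => (∑ i, dirDeriv (v i) h w ^ 2) / h w) z := by
  have hv (i : ι) : ContDiffAt ℝ 2 (dirDeriv (v i) h) z := contDiffAt_dirDeriv hh (by norm_num) _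
  have hh₂ : ContDiffAt ℝ 2 h z := hh.of_le (by norm_num)
  have hvh (i : ι) : ContDiffAt ℝ 2 (fun w => dirDeriv (v i) h w ^ 2 / h w) z :=
    ((hv i).pow 2).div hh₂ hz.ne'
  simp only [Finset.sum_div _ _ (h _)]
  rw [diffusionOp_sum b e fun i _ => hvh i]
  refine le_of_eq_of_le ?_
    (Finset.sum_le_sum fun i _ => le_diffusionOp_sq_div b e (hv i) hh₂ hz)
  simp only [dirDeriv_diffusionOp e hb hh, Finset.sum_div, Finset.mul_sum, Finset.sum_mul,
    ← Finset.sum_sub_distrib]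
  exact Finset.sum_congr rfl fun i _ => by ring

theorem le_generalizedGamma_distortedEntropy (hb : DifferentiableAt ℝ b z)
    (hh : ContDiffAt ℝ 3 h z) (hz : 0 < h z) :
    (-(∑ i, dirDeriv (v i) h z * dirDeriv (fderiv ℝ b z (v i)) h z) +
        β / 2 * carreDuChamp e h h z) / h z ≤
      generalizedGamma (diffusionOp b e) (distortedEntropy v β) (distortedEntropyDeriv v β)
        h z := by
  have hh₂ : ContDiffAt ℝ 2 h z := hh.of_le (by norm_num)
  have hquad : ContDiffAt ℝ 2 (fun w => (∑ i, dirDeriv (v i) h w ^ 2) / h w) z :=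
    (ContDiffAt.sum fun i _ => (contDiffAt_dirDeriv hh (by norm_num) (v i)).pow 2).div hh₂ hz.ne'
  have hlog : ContDiffAt ℝ 2 (fun w => β * (h w * Real.log (h w))) z :=
    contDiffAt_const.mul (hh₂.mul (hh₂.log hz.ne'))
  have hL : diffusionOp b e (distortedEntropy v β h) z =
      diffusionOp b e (fun w => (∑ i, dirDeriv (v i) h w ^ 2) / h w) z +
        (β * (1 + Real.log (h z)) * diffusionOp b e h z + β / h z * carreDuChamp e h h z) := by
    rw [← diffusionOp_const_mul_mul_log b e β hh₂ hz.ne', ← diffusionOp_add b e hquad hlog]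
    rfl
  have hle := le_diffusionOp_sum_sq_dirDeriv_div e v hb hh hz
  rw [generalizedGamma, hL, distortedEntropyDeriv]
  ring_nf at hle ⊢
  linarith

end DistortedEntropy

end DiffusionOperator

section Langevin

variable {d : ℕ} (U : (Fin d → ℝ) → ℝ) (σ : ℝ) {h : (Fin d → ℝ) × (Fin d → ℝ) → ℝ}
  {z : (Fin d → ℝ) × (Fin d → ℝ)}

lemma dirDeriv_prodMk (p q : Fin d → ℝ) (f : (Fin d → ℝ) × (Fin d → ℝ) → ℝ)
    (z : (Fin d → ℝ) × (Fin d → ℝ)) :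
    dirDeriv (p, q) f z = ∑ i, p i * pdx i f z + ∑ i, q i * pdy i f z := by
  have hpq : (p, q) = ∑ i, p i • ((Pi.single i 1, 0) : (Fin d → ℝ) × (Fin d → ℝ)) +
      ∑ i, q i • ((0, Pi.single i 1) : (Fin d → ℝ) × (Fin d → ℝ)) := by
    ext k <;> simp [Prod.fst_sum, Prod.snd_sum, Finset.sum_apply, Pi.single_apply]
  simp only [dirDeriv, pdx, pdy, hpq, map_add, map_sum, map_smul, smul_eq_mul]

lemma pdx_add_pdy (i : Fin d) (f : (Fin d → ℝ) × (Fin d → ℝ) → ℝ)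
    (z : (Fin d → ℝ) × (Fin d → ℝ)) :
    pdx i f z + pdy i f z = dirDeriv (Pi.single i 1, Pi.single i 1) f z := by
  simp [dirDeriv_prodMk, Pi.single_apply]

/-- The drift `(x, y) ↦ (-y, ∇U(x) - y/σ)` of the kinetic Langevin operator. -/
def langevinDrift (z : (Fin d → ℝ) × (Fin d → ℝ)) : (Fin d → ℝ) × (Fin d → ℝ) :=
  (-z.2, fun i => gradU U i z.1 - z.2 i / σ)

lemma langevin_eq_diffusionOp :
    langevin U σ = diffusionOp (langevinDrift U σ) fun i : Fin d => (0, Pi.single i 1) := by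
  funext f z
  rw [diffusionOp, langevinDrift, dirDeriv_prodMk]
  rfl

variable {U}

lemma hasFDerivAt_gradU (hU : ContDiffAt ℝ 2 U z.1) (i : Fin d) :
    HasFDerivAt (gradU U i) (fderiv ℝ (gradU U i) z.1) z.1 :=
  (differentiableAt_dirDeriv hU (Pi.single i 1)).hasFDerivAt

lemma hasFDerivAt_langevinDrift (hU : ContDiffAt ℝ 2 U z.1) :
    HasFDerivAt (langevinDrift U σ)
      ((-ContinuousLinearMap.snd ℝ _ _).prod (.pi fun i =>
        (fderiv ℝ (gradU U i) z.1).comp (.fst ℝ _ _) -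
          σ⁻¹ • (ContinuousLinearMap.proj i).comp (.snd ℝ _ _))) z := by
  refine hasFDerivAt_snd.fun_neg.prodMk (hasFDerivAt_pi.2 fun i => ?_)
  have hgrad := (hasFDerivAt_gradU hU i).comp z hasFDerivAt_fst
  have hy := (((ContinuousLinearMap.proj (R := ℝ) (φ := fun _ : Fin d => ℝ) i).comp
    (.snd ℝ (Fin d → ℝ) _)).hasFDerivAt (x := z)).const_mul σ⁻¹
  simp only [div_eq_inv_mul]
  exact hgrad.fun_sub hy

lemma dirDeriv_fderiv_langevinDrift_diagonal (hU : ContDiffAt ℝ 2 U z.1) (i : Fin d) :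
    dirDeriv (fderiv ℝ (langevinDrift U σ) z (Pi.single i 1, Pi.single i 1)) h z =
      -(pdx i h z - ∑ k, hessU U i k z.1 * pdy k h z + 1 / σ * pdy i h z) := by
  have hD : fderiv ℝ (langevinDrift U σ) z (Pi.single i 1, Pi.single i 1) =
      (-Pi.single i 1, fun k => hessU U i k z.1 - σ⁻¹ * Pi.single (M := fun _ => ℝ) i 1 k) := by
    rw [(hasFDerivAt_langevinDrift σ hU).fderiv]
    rfl
  rw [hD, dirDeriv_prodMk]
  simp only [Pi.neg_apply, Pi.single_apply, neg_mul, ite_mul, one_mul, zero_mul, mul_ite, mul_one,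
    mul_zero, sub_mul, Finset.sum_neg_distrib, Finset.sum_sub_distrib, Finset.sum_ite_eq',
    Finset.mem_univ, ↓reduceIte]
  ring

end Langevin

section QuadraticForm

variable {ι κ : Type*} [Fintype ι] [Fintype κ]

lemma sum_mul_sum_mul_le_frobenius (H : ι → κ → ℝ) (a : ι → ℝ) (q : κ → ℝ) :
    ∑ i, a i * ∑ k, H i k * q k ≤
      √(∑ i, ∑ k, H i k ^ 2) * (√(∑ i, a i ^ 2) * √(∑ k, q k ^ 2)) := by
  have hcs := Real.sum_mul_le_sqrt_mul_sqrt Finset.univ (fun p : ι × κ => H p.1 p.2)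
    (fun p => a p.1 * q p.2)
  simp only [Fintype.sum_prod_type, mul_pow, ← Finset.sum_mul_sum] at hcs
  rw [Real.sqrt_mul (by positivity)] at hcs
  simpa only [Finset.mul_sum, mul_left_comm] using hcs

lemma half_sum_sq_add_sum_sq_le (H : ι → ι → ℝ) (p q : ι → ℝ) {K s β : ℝ}
    (hK : √(∑ i, ∑ k, H i k ^ 2) ≤ K) (hs : 0 ≤ s) (hβ : 2 + (K + s) ^ 2 ≤ β) :
    (1 / 2) * (∑ i, p i ^ 2 + ∑ i, q i ^ 2) ≤
      ∑ i, (p i + q i) * (p i - ∑ k, H i k * q k + s * q i) + β / 2 * ∑ i, q i ^ 2 := by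
  set a : ι → ℝ := fun i => p i + q i
  set A := √(∑ i, a i ^ 2)
  set Q := √(∑ i, q i ^ 2)
  have hA : A ^ 2 = ∑ i, a i ^ 2 := Real.sq_sqrt (by positivity)
  have hQ : Q ^ 2 = ∑ i, q i ^ 2 := Real.sq_sqrt (by positivity)
  have hess : ∑ i, a i * ∑ k, H i k * q k ≤ K * (A * Q) :=
    (sum_mul_sum_mul_le_frobenius H a q).trans (by gcongr)
  have cross : -(∑ i, a i * q i) ≤ A * Q := by
    simpa [Finset.sum_neg_distrib] using
      Real.sum_mul_le_sqrt_mul_sqrt Finset.univ (fun i => -a i) q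
  have hp : ∑ i, p i ^ 2 = A ^ 2 - 2 * (∑ i, a i * q i) + Q ^ 2 := by
    rw [hA, hQ, Finset.mul_sum, ← Finset.sum_sub_distrib, ← Finset.sum_add_distrib]
    exact Finset.sum_congr rfl fun i _ => by ring
  have hform : ∑ i, a i * (p i - ∑ k, H i k * q k + s * q i) =
      A ^ 2 + (s - 1) * (∑ i, a i * q i) - ∑ i, a i * ∑ k, H i k * q k := by
    rw [hA, Finset.mul_sum, ← Finset.sum_add_distrib, ← Finset.sum_sub_distrib]
    exact Finset.sum_congr rfl fun i _ => by ring
  have young : (K + s) * (A * Q) ≤ A ^ 2 / 2 + (K + s) ^ 2 * Q ^ 2 / 2 := by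
    linarith [sq_nonneg (A - (K + s) * Q)]
  have hβQ : (2 + (K + s) ^ 2) * Q ^ 2 ≤ β * Q ^ 2 := by gcongr
  rw [hp, hform, ← hQ]
  linarith [mul_le_mul_of_nonneg_left cross hs]

end QuadraticForm

lemma hessNormInf_nonneg {d : ℕ} (U : (Fin d → ℝ) → ℝ) : 0 ≤ hessNormInf U :=
  Real.iSup_nonneg fun _ => Real.sqrt_nonneg _

theorem stmt6_general {d : ℕ} {U : (Fin d → ℝ) → ℝ} {h : (Fin d → ℝ) × (Fin d → ℝ) → ℝ}
    {z : (Fin d → ℝ) × (Fin d → ℝ)} {σ K β : ℝ} (hU : ContDiffAt ℝ 2 U z.1)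
    (hK : √(∑ i, ∑ j, hessU U i j z.1 ^ 2) ≤ K) (hσ : 0 < σ)
    (hβ : 2 + (K + 1 / σ) ^ 2 ≤ β) (hh : ContDiffAt ℝ 3 h z) (hpos : 0 < h z) :
    (1 / 2) * (langevin U σ
        (fun w => (∑ i, (pdx i h w + pdy i h w) ^ 2) / h w + β * (h w * Real.log (h w))) z
      - (2 * (∑ i, (pdx i h z + pdy i h z)
            * (pdx i (langevin U σ h) z + pdy i (langevin U σ h) z)) / h z
        - (∑ i, (pdx i h z + pdy i h z) ^ 2) * langevin U σ h z / (h z) ^ 2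
        + β * (1 + Real.log (h z)) * langevin U σ h z))
      ≥ (1 / 2) * ((∑ i, (pdx i h z) ^ 2) + ∑ i, (pdy i h z) ^ 2) / h z := by
  have hb : DifferentiableAt ℝ (langevinDrift U σ) z :=
    (hasFDerivAt_langevinDrift σ hU).differentiableAt
  have hΓ := le_generalizedGamma_distortedEntropy (fun i : Fin d => (0, Pi.single i 1))
    (fun i : Fin d => (Pi.single i 1, Pi.single i 1)) β hb hh hpos
  have hcarre : carreDuChamp (fun i : Fin d => (0, Pi.single i 1)) h h z = ∑ i, pdy i h z ^ 2 :=
    Finset.sum_congr rfl fun i _ => (sq (pdy i h z)).symm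
  have hquad := half_sum_sq_add_sum_sq_le (fun i j => hessU U i j z.1) (fun i => pdx i h z)
    (fun i => pdy i h z) hK (one_div_pos.2 hσ).le hβ
  simp only [← langevin_eq_diffusionOp, dirDeriv_fderiv_langevinDrift_diagonal σ hU, hcarre,
    ← pdx_add_pdy, mul_neg, Finset.sum_neg_distrib, neg_neg] at hΓ
  refine ge_iff_le.2 ((div_le_div_of_nonneg_right hquad hpos.le).trans (hΓ.trans_eq ?_))
  simp only [pdx_add_pdy]
  rfl

/-- For the kinetic Langevin operator, κ = ‖∇²U‖_∞ + 1 + 1/σ, β = 1 + 2κ², A = ∇ₓ + ∇_y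
and the distorted entropy functional Φ(h) = |Ah|²/h + β h ln h, pointwise
Γ_{L,Φ}(h) ≥ (1/2)|∇h|²/h for every smooth positive h. -/
theorem stmt6 {d : ℕ} (U : (Fin d → ℝ) → ℝ) (hU : ContDiff ℝ (⊤ : ℕ∞) U)
    (hK : BddAbove (Set.range fun x : Fin d → ℝ =>
      Real.sqrt (∑ i, ∑ j, (hessU U i j x) ^ 2)))
    (σ : ℝ) (hσ : 0 < σ)
    (h : (Fin d → ℝ) × (Fin d → ℝ) → ℝ) (hh : ContDiff ℝ (⊤ : ℕ∞) h)
    (hpos : ∀ z, 0 < h z)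
    (z : (Fin d → ℝ) × (Fin d → ℝ)) :
    (1 / 2) * (langevin U σ
        (fun w => (∑ i, (pdx i h w + pdy i h w) ^ 2) / h w
          + (1 + 2 * (hessNormInf U + 1 + 1 / σ) ^ 2) * (h w * Real.log (h w))) z
      - (2 * (∑ i, (pdx i h z + pdy i h z)
            * (pdx i (langevin U σ h) z + pdy i (langevin U σ h) z)) / h z
        - (∑ i, (pdx i h z + pdy i h z) ^ 2) * langevin U σ h z / (h z) ^ 2
        + (1 + 2 * (hessNormInf U + 1 + 1 / σ) ^ 2) * (1 + Real.log (h z))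
            * langevin U σ h z))
      ≥ (1 / 2) * ((∑ i, (pdx i h z) ^ 2) + ∑ i, (pdy i h z) ^ 2) / h z :=
  stmt6_general (K := hessNormInf U) (hU.contDiffAt.of_le (by norm_cast)) (le_ciSup hK z.1) hσ
    (by nlinarith [hessNormInf_nonneg U, one_div_pos.2 hσ])
    (hh.contDiffAt.of_le (by norm_cast)) (hpos z)
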